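/- arXiv:1708.06718 — 2 statements merged into one kernel-verified Lean document; each statement's English description precedes it below -/
import Mathlib

section
/- (Sinclair's lemma) Let G be a simple graph with finite vertex set V, |V| = n, equipped with a family of canonical paths (p_{s,t})_{(s,t) ∈ V × V}. Then for every nonempty S ⊆ V with 2|S| ≤ n one has 2 · φ_max · |δ(S)| ≥ n · |S|; equivalently, the edge expansion of G is at least n/(2 φ_max). -/
/-- The edge boundary `δ(S)` of a vertex set `S`: the set of edges of `G` with
exactly one endpoint in `S`. -/
noncomputable def edgeBoundary {V : Type*} [Fintype V] (G : SimpleGraph V)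
    (S : Finset V) : Finset (Sym2 V) := by
  classical exact G.edgeFinset.filter (fun e => ∃ a ∈ S, ∃ b ∉ S, e = s(a, b))

/-- Given a family of canonical paths `p`, `phi G p e` counts the ordered pairs
`(s, t)` whose canonical path uses the edge `e`. -/
noncomputable def phi {V : Type*} [Fintype V] (G : SimpleGraph V)
    (p : ∀ s t : V, G.Walk s t) (e : Sym2 V) : ℕ := by
  classical exact (Finset.univ.filter (fun st : V × V => e ∈ (p st.1 st.2).edges)).card

/-- `phiMax G p` is the maximum of `phi G p e` over all edges `e` of `G`. -/
noncomputable def phiMax {V : Type*} [Fintype V] (G : SimpleGraph V)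
    (p : ∀ s t : V, G.Walk s t) : ℕ := by
  classical exact G.edgeFinset.sup (phi G p)

/-! Each of the `|S| |Sᶜ|` canonical paths from `S` to `Sᶜ` crosses `δ(S)`, and every edge of `δ(S)`
lies on at most `φ_max` paths, so `|S| |Sᶜ| ≤ φ_max |δ(S)|`. If `2 |S| ≤ n`, then `n ≤ 2 |Sᶜ|`. -/

section CanonicalPaths

variable {V : Type*} [Fintype V] {G : SimpleGraph V} {S : Finset V} {e : Sym2 V}

theorem mem_edgeBoundary :
    e ∈ edgeBoundary G S ↔ e ∈ G.edgeSet ∧ ∃ a ∈ S, ∃ b ∉ S, e = s(a, b) := by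
  simp [edgeBoundary]

theorem exists_mem_edgeBoundary_mem_edges {s t : V} (w : G.Walk s t) (hs : s ∈ S) (ht : t ∉ S) :
    ∃ e ∈ edgeBoundary G S, e ∈ w.edges := by
  obtain ⟨d, hd, hfst, hsnd⟩ := w.exists_boundary_dart (S : Set V) hs ht
  exact ⟨d.edge, mem_edgeBoundary.2 ⟨d.edge_mem, d.fst, hfst, d.snd, hsnd, rfl⟩,
    List.mem_map_of_mem hd⟩

theorem phi_eq_card_filter [DecidableEq V] (p : ∀ s t : V, G.Walk s t) (e : Sym2 V) :
    phi G p e = (Finset.univ.filter fun st : V × V ↦ e ∈ (p st.1 st.2).edges).card := by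
  unfold phi
  congr!

theorem phi_le_phiMax (p : ∀ s t : V, G.Walk s t) (he : e ∈ G.edgeSet) :
    phi G p e ≤ phiMax G p := by
  classical exact Finset.le_sup (f := phi G p) (SimpleGraph.mem_edgeFinset.2 he)

theorem card_mul_card_compl_le_sum_phi [DecidableEq V] (p : ∀ s t : V, G.Walk s t)
    (S : Finset V) : S.card * Sᶜ.card ≤ ∑ e ∈ edgeBoundary G S, phi G p e := by
  let pairsThrough (e : Sym2 V) : Finset (V × V) := {st | e ∈ (p st.1 st.2).edges}
  have crossing : S ×ˢ Sᶜ ⊆ (edgeBoundary G S).biUnion pairsThrough := by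
    rintro ⟨s, t⟩ hst
    obtain ⟨hs, ht⟩ := Finset.mem_product.1 hst
    obtain ⟨e, he, hep⟩ :=
      exists_mem_edgeBoundary_mem_edges (p s t) hs (Finset.mem_compl.1 ht)
    exact Finset.mem_biUnion.2 ⟨e, he, (Finset.mem_filter_univ _).2 hep⟩
  calc S.card * Sᶜ.card = (S ×ˢ Sᶜ).card := (Finset.card_product ..).symm
    _ ≤ ((edgeBoundary G S).biUnion pairsThrough).card := Finset.card_le_card crossing
    _ ≤ ∑ e ∈ edgeBoundary G S, (pairsThrough e).card := Finset.card_biUnion_le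
    _ = ∑ e ∈ edgeBoundary G S, phi G p e := by simp only [pairsThrough, phi_eq_card_filter]

theorem card_mul_card_compl_le_phiMax_mul_card_edgeBoundary [DecidableEq V]
    (p : ∀ s t : V, G.Walk s t) (S : Finset V) :
    S.card * Sᶜ.card ≤ phiMax G p * (edgeBoundary G S).card :=
  calc S.card * Sᶜ.card ≤ ∑ e ∈ edgeBoundary G S, phi G p e := card_mul_card_compl_le_sum_phi p S
    _ ≤ (edgeBoundary G S).card • phiMax G p :=
      Finset.sum_le_card_nsmul _ _ _ fun _ he ↦ phi_le_phiMax p (mem_edgeBoundary.1 he).1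
    _ = phiMax G p * (edgeBoundary G S).card := by rw [smul_eq_mul, mul_comm]

end CanonicalPaths

/-- Sinclair's lemma: for every nonempty `S ⊆ V` with `2|S| ≤ n`,
one has `2 · φ_max · |δ(S)| ≥ n · |S|`, i.e. the edge expansion of `G` is at
least `n / (2 φ_max)`. -/
theorem sinclair_lemma {V : Type*} [Fintype V] (G : SimpleGraph V)
    (p : ∀ s t : V, G.Walk s t) (S : Finset V) (hS : S.Nonempty)
    (hhalf : 2 * S.card ≤ Fintype.card V) :
    Fintype.card V * S.card ≤ 2 * phiMax G p * (edgeBoundary G S).card := by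
  classical
  have card_le : Fintype.card V ≤ 2 * Sᶜ.card := by
    have := S.card_add_card_compl
    lia
  calc Fintype.card V * S.card ≤ 2 * Sᶜ.card * S.card := Nat.mul_le_mul_right _ card_le
    _ = 2 * (S.card * Sᶜ.card) := by ring
    _ ≤ 2 * (phiMax G p * (edgeBoundary G S).card) :=
      Nat.mul_le_mul_left 2 (card_mul_card_compl_le_phiMax_mul_card_edgeBoundary p S)
    _ = 2 * phiMax G p * (edgeBoundary G S).card := (mul_assoc ..).symm
end

section
/- For every integer d ≥ 4 and every real constant 0 < c < 1/2 there exist a real constant K > 0 and a sequence of d-regular simple graphs (G_i)_{i ∈ ℕ} with |V(G_i)| → ∞ such that for every i, every separator (A, B, C) of G_i with separation constant c has size |C| ≥ |V(G_i)| / (K · log |V(G_i)|). -/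
/-!
A finite vertex-transitive graph of diameter at most `D` on `n` vertices satisfies
`|A| * |B| ≤ D * n * |C|` whenever `C` separates `A` from `B`: fix a path of length at most `D` for
each pair of vertices and move all of these paths by a random automorphism. Every vertex of a moved
path is uniformly distributed, so the path of a given pair hits `C` with probability at most
`D * |C| / n`, whereas it must hit `C` if its ends are moved into `A` and `B`.

It remains to find vertex-transitive `d`-regular graphs with diameter `O(log n)`. Binary wrapped
butterflies do this for `d = 4`, and their Cartesian products with the complete graph on `d - 3`
vertices do it for every `d ≥ 4`.
-/

open Finset Function MulAction SimpleGraph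

section Averaging

variable {Γ X : Type*} [Group Γ] [MulAction Γ X] [Fintype Γ] [Fintype X] [DecidableEq X]

variable (Γ) in
theorem sum_card_smul_mem (S : Finset X) :
    ∑ x, #{g : Γ | g • x ∈ S} = Fintype.card Γ * #S := by
  have card_fiber (g : Γ) : #{x | g • x ∈ S} = #S :=
    card_bijective (g • ·) (MulAction.bijective g) (by simp)
  calc ∑ x, #{g : Γ | g • x ∈ S} = ∑ g : Γ, #{x | g • x ∈ S} :=
        sum_card_bipartiteAbove_eq_sum_card_bipartiteBelow fun x (g : Γ) ↦ g • x ∈ S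
    _ = Fintype.card Γ * #S := by simp [card_fiber]

variable (Γ) in
theorem card_mul_card_smul_mem [IsPretransitive Γ X] (S : Finset X) (x : X) :
    Fintype.card X * #{g : Γ | g • x ∈ S} = Fintype.card Γ * #S := by
  have card_eq (y : X) : #{g : Γ | g • y ∈ S} = #{g : Γ | g • x ∈ S} := by
    obtain ⟨h, rfl⟩ := exists_smul_eq Γ x y
    exact card_bijective (· * h) (Group.mulRight_bijective h) (by simp [mul_smul])
  simp [← sum_card_smul_mem, card_eq]

end Averaging

/-- `C` separates `A` from `B` in `G`: the three sets cover the vertices, and `A` and `B` are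
disjoint with no edge between them. The sets `A` and `B` are allowed to meet `C`. -/
structure Separates {V : Type*} (G : SimpleGraph V) (A B C : Set V) : Prop where
  disjoint : Disjoint A B
  cover : A ∪ B ∪ C = Set.univ
  not_adj : ∀ a ∈ A, ∀ b ∈ B, ¬ G.Adj a b

section VertexTransitive

variable {V : Type*} {G : SimpleGraph V} {A B C : Set V}

theorem Separates.exists_mem_support_tail (h : Separates G A B C) {a b : V} (p : G.Walk a b)
    (ha : a ∈ A) (hb : b ∈ B) : ∃ w ∈ p.support.tail, w ∈ C := by
  obtain ⟨e, he, he_fst, he_snd⟩ :=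
    p.exists_boundary_dart A ha (h.disjoint.notMem_of_mem_right hb)
  have he_cover : e.snd ∈ A ∪ B ∪ C := h.cover ▸ Set.mem_univ _
  refine ⟨e.snd, p.map_snd_darts ▸ List.mem_map_of_mem he, ?_⟩
  exact he_cover.resolve_left (not_or_intro he_snd fun hB ↦ h.not_adj _ he_fst _ hB e.adj)

theorem Separates.card_mul_card_smul_mem_le [Fintype V] [DecidableEq V] [Fintype (G ≃g G)]
    [IsPretransitive (G ≃g G) V] {A B C : Finset V} (h : Separates G (A : Set V) B C) {D : ℕ}
    (hD : G.ediam ≤ D) (x : V × V) :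
    Fintype.card V * #{g : G ≃g G | g • x ∈ A ×ˢ B} ≤ D * (Fintype.card (G ≃g G) * #C) := by
  have edist_le : G.edist x.1 x.2 ≤ D := edist_le_ediam.trans hD
  obtain ⟨p, hp⟩ :=
    exists_walk_of_edist_ne_top (ne_top_of_le_ne_top (ENat.natCast_ne_top D) edist_le)
  have length_le : p.length ≤ D := by exact_mod_cast hp.trans_le edist_le
  have path_meets : ({g : G ≃g G | g • x ∈ A ×ˢ B} : Finset _) ⊆
      p.support.tail.toFinset.biUnion fun w ↦ {g : G ≃g G | g • w ∈ C} := by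
    intro g hg
    simp only [mem_filter_univ, mem_product] at hg
    obtain ⟨_, hw, hwC⟩ := h.exists_mem_support_tail (p.map g.toHom) hg.1 hg.2
    rw [Walk.support_map, ← List.map_tail] at hw
    obtain ⟨w, hwp, rfl⟩ := List.mem_map.1 hw
    exact mem_biUnion.2 ⟨w, List.mem_toFinset.2 hwp, mem_filter_univ _ |>.2 hwC⟩
  calc Fintype.card V * #{g : G ≃g G | g • x ∈ A ×ˢ B}
      ≤ Fintype.card V * ∑ w ∈ p.support.tail.toFinset, #{g : G ≃g G | g • w ∈ C} := by
        gcongr; exact (card_le_card path_meets).trans card_biUnion_le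
    _ = #p.support.tail.toFinset * (Fintype.card (G ≃g G) * #C) := by
        simp only [mul_sum, card_mul_card_smul_mem, sum_const, smul_eq_mul]
    _ ≤ D * (Fintype.card (G ≃g G) * #C) := by
        gcongr
        exact (List.toFinset_card_le _).trans (by simpa using length_le)

theorem Separates.ncard_mul_ncard_le [Finite V] [IsPretransitive (G ≃g G) V]
    (h : Separates G A B C) {D : ℕ} (hD : G.ediam ≤ D) :
    A.ncard * B.ncard ≤ D * Nat.card V * C.ncard := by
  classical
  have := Fintype.ofFinite V
  have := Fintype.ofInjective (fun g : G ≃g G ↦ (g : V → V)) DFunLike.coe_injective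
  lift A to Finset V using A.toFinite
  lift B to Finset V using B.toFinite
  lift C to Finset V using C.toFinite
  simp only [Set.ncard_coe_finset, Nat.card_eq_fintype_card]
  cases isEmpty_or_nonempty V
  · simp [eq_empty_of_isEmpty A]
  have pos : 0 < Fintype.card V * Fintype.card (G ≃g G) :=
    Nat.mul_pos Fintype.card_pos Fintype.card_pos
  refine Nat.le_of_mul_le_mul_left ?_ pos
  calc Fintype.card V * Fintype.card (G ≃g G) * (#A * #B)
      = ∑ x : V × V, Fintype.card V * #{g : G ≃g G | g • x ∈ A ×ˢ B} := by
        rw [← mul_sum, sum_card_smul_mem, card_product, mul_assoc]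
    _ ≤ ∑ _x : V × V, D * (Fintype.card (G ≃g G) * #C) :=
        sum_le_sum fun x _ ↦ h.card_mul_card_smul_mem_le hD x
    _ = Fintype.card V * Fintype.card (G ≃g G) * (D * Fintype.card V * #C) := by
        rw [sum_const, card_univ, Fintype.card_prod, smul_eq_mul]; ring

theorem Separates.sq_mul_card_le [Finite V] [IsPretransitive (G ≃g G) V]
    (h : Separates G A B C) {D : ℕ} (hD : G.ediam ≤ D) {c : ℝ} (hc : 0 ≤ c)
    (hA : c * Nat.card V ≤ A.ncard) (hB : c * Nat.card V ≤ B.ncard) :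
    c ^ 2 * Nat.card V ≤ D * C.ncard := by
  cases isEmpty_or_nonempty V
  · simpa using (by positivity : (0 : ℝ) ≤ D * C.ncard)
  have card_pos : (0 : ℝ) < Nat.card V := by exact_mod_cast Nat.card_pos
  refine le_of_mul_le_mul_left ?_ card_pos
  calc (Nat.card V : ℝ) * (c ^ 2 * Nat.card V) = (c * Nat.card V) * (c * Nat.card V) := by ring
    _ ≤ A.ncard * B.ncard := by gcongr
    _ ≤ D * Nat.card V * C.ncard := by exact_mod_cast h.ncard_mul_ncard_le hD
    _ = Nat.card V * (D * C.ncard) := by ring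

theorem Separates.div_log_le_ncard [Finite V] [IsPretransitive (G ≃g G) V]
    (h : Separates G A B C) {D : ℕ} (hD : G.ediam ≤ D) {κ : ℝ}
    (hκ : D ≤ κ * Real.log (Nat.card V)) {c : ℝ} (hc : 0 < c)
    (hA : c * Nat.card V ≤ A.ncard) (hB : c * Nat.card V ≤ B.ncard) :
    Nat.card V / (κ / c ^ 2 * Real.log (Nat.card V)) ≤ C.ncard := by
  have log_nonneg : 0 ≤ κ * Real.log (Nat.card V) := D.cast_nonneg.trans hκ
  rw [div_mul_eq_mul_div]
  refine div_le_of_le_mul₀ (by positivity) (by positivity) ?_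
  rw [mul_div_assoc', le_div_iff₀' (by positivity), mul_comm (C.ncard : ℝ)]
  exact (h.sq_mul_card_le hD hc.le hA hB).trans (by gcongr)

end VertexTransitive

section BoxProd

variable {V W : Type*} {G : SimpleGraph V} {H : SimpleGraph W}

theorem ediam_boxProd_le : (G □ H).ediam ≤ G.ediam + H.ediam :=
  ediam_le_of_edist_le fun x y ↦
    (edist_boxProd x y).trans_le (add_le_add edist_le_ediam edist_le_ediam)

theorem card_neighborSet_boxProd (x : V × W) [Finite (G.neighborSet x.1)]
    [Finite (H.neighborSet x.2)] : Nat.card ((G □ H).neighborSet x) =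
      Nat.card (G.neighborSet x.1) + Nat.card (H.neighborSet x.2) := by
  have := Fintype.ofFinite (G.neighborSet x.1)
  have := Fintype.ofFinite (H.neighborSet x.2)
  simp only [Nat.card_eq_fintype_card, card_neighborSet_eq_degree, degree_boxProd]

/-- The automorphism of `G □ H` acting by `g` and `h` on the two coordinates. -/
def boxProdAut (g : G ≃g G) (h : H ≃g H) : (G □ H) ≃g (G □ H) where
  toEquiv := g.toEquiv.prodCongr h.toEquiv
  map_rel_iff' := by simp [boxProd_adj, Iso.map_adj_iff]

instance isPretransitive_boxProd [IsPretransitive (G ≃g G) V] [IsPretransitive (H ≃g H) W] :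
    IsPretransitive ((G □ H) ≃g (G □ H)) (V × W) where
  exists_smul_eq x y := by
    obtain ⟨g, hg⟩ := exists_smul_eq (G ≃g G) x.1 y.1
    obtain ⟨h, hh⟩ := exists_smul_eq (H ≃g H) x.2 y.2
    exact ⟨boxProdAut g h, Prod.ext hg hh⟩

end BoxProd

section CompleteGraph

variable {V : Type*}

theorem ediam_top_le_one : (⊤ : SimpleGraph V).ediam ≤ 1 :=
  ediam_le_of_edist_le fun u v ↦ edist_le_one_iff_adj_or_eq.2 (ne_or_eq u v)

instance isPretransitive_completeGraph :
    IsPretransitive ((⊤ : SimpleGraph V) ≃g (⊤ : SimpleGraph V)) V where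
  exists_smul_eq u v := by
    classical exact ⟨Iso.completeGraph (Equiv.swap u v), Equiv.swap_apply_left u v⟩

end CompleteGraph

/-- The wrapped butterfly with `m` levels over the alphabet `α`: a vertex is a level `i : ZMod m`
together with a word indexed by `ZMod m`, and an edge moves from level `i` to level `i + 1` while
changing at most the letter at position `i`. For `m = 1` the loops are discarded. -/
def wrappedButterfly (m : ℕ) (α : Type*) : SimpleGraph (ZMod m × (ZMod m → α)) :=
  SimpleGraph.fromRel fun u v ↦ v.1 = u.1 + 1 ∧ ∀ p ≠ u.1, v.2 p = u.2 p

section WrappedButterfly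

variable {m : ℕ} {α : Type*}

theorem wrappedButterfly_edist_update_le_one (i : ZMod m) (x : ZMod m → α) (a : α) :
    (wrappedButterfly m α).edist (i, x) (i + 1, update x i a) ≤ 1 := by
  rw [edist_le_one_iff_adj_or_eq, or_iff_not_imp_right]
  exact fun hne ↦ ⟨hne, .inl ⟨rfl, fun p hp ↦ update_of_ne hp a x⟩⟩

theorem wrappedButterfly_edist_add_natCast_le (n : ℕ) (i : ZMod m) (x y : ZMod m → α)
    (hxy : ∀ p, (∀ k < n, p ≠ i + k) → y p = x p) :
    (wrappedButterfly m α).edist (i, x) (i + n, y) ≤ n := by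
  induction n generalizing i x with
  | zero => simp [funext fun p ↦ hxy p (by simp)]
  | succ n ih =>
    have agree_after_step (p : ZMod m) (hp : ∀ k < n, p ≠ i + 1 + k) :
        y p = update x i (y i) p := by
      obtain rfl | hpi := eq_or_ne p i
      · simp
      rw [update_of_ne hpi]
      refine hxy p fun k hk ↦ ?_
      cases k with
      | zero => simpa using hpi
      | succ k => simpa [add_assoc, add_comm, add_left_comm] using hp k (by omega)
    calc (wrappedButterfly m α).edist (i, x) (i + ↑(n + 1), y)
        ≤ 1 + n := by
          refine SimpleGraph.edist_triangle.trans
            (add_le_add (wrappedButterfly_edist_update_le_one i x (y i)) ?_)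
          simpa [add_assoc, add_comm (n : ZMod m)] using ih (i + 1) _ agree_after_step
      _ = ↑(n + 1) := by push_cast; ring

theorem ediam_wrappedButterfly_le [NeZero m] : (wrappedButterfly m α).ediam ≤ 2 * m := by
  refine ediam_le_of_edist_le fun ⟨i, x⟩ ⟨j, y⟩ ↦ ?_
  -- Going once around all levels allows every letter to be rewritten.
  have all_rewritten (p : ZMod m) (hp : ∀ k < m + (j - i).val, p ≠ i + k) : y p = x p :=
    absurd (by simp) (hp (p - i).val ((ZMod.val_lt _).trans_le (Nat.le_add_right _ _)))
  calc (wrappedButterfly m α).edist (i, x) (j, y) ≤ ↑(m + (j - i).val) := by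
        simpa using wrappedButterfly_edist_add_natCast_le _ i x y all_rewritten
    _ ≤ 2 * m := by
        exact_mod_cast (by have := (j - i).val_lt; omega : m + (j - i).val ≤ 2 * m)

/-- The permutation of the words indexed by `ZMod m` that relabels the letter at position `p` by
`σ p` and moves it to position `p + s`, used to build automorphisms of the wrapped butterfly. -/
def rotateWord (s : ZMod m) (σ : ZMod m → Equiv.Perm α) : Equiv.Perm (ZMod m → α) :=
  (Equiv.addRight s).piCongr σ

theorem rotateWord_apply_add (s : ZMod m) (σ : ZMod m → Equiv.Perm α) (x : ZMod m → α)
    (p : ZMod m) : rotateWord s σ x (p + s) = σ p (x p) :=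
  Equiv.piCongr_apply_apply _ _ x p

/-- The automorphism of the wrapped butterfly that rotates the levels by `s` and the words by
`rotateWord s σ`. -/
def wrappedButterflyAut (s : ZMod m) (σ : ZMod m → Equiv.Perm α) :
    wrappedButterfly m α ≃g wrappedButterfly m α where
  toEquiv := (Equiv.addRight s).prodCongr (rotateWord s σ)
  map_rel_iff' {u v} := by
    have agree_iff (i : ZMod m) (x y : ZMod m → α) :
        (∀ p ≠ i + s, rotateWord s σ y p = rotateWord s σ x p) ↔ ∀ p ≠ i, y p = x p := by
      rw [(Equiv.addRight s).surjective.forall]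
      simp [rotateWord_apply_add]
    simp [wrappedButterfly, Prod.ext_iff, agree_iff, add_right_comm _ s]

instance isPretransitive_wrappedButterfly :
    IsPretransitive (wrappedButterfly m α ≃g wrappedButterfly m α) (ZMod m × (ZMod m → α)) where
  exists_smul_eq := by
    classical
    rintro ⟨i, x⟩ ⟨j, y⟩
    refine ⟨wrappedButterflyAut (j - i) fun p ↦ Equiv.swap (x p) (y (p + (j - i))), ?_⟩
    refine Prod.ext (add_sub_cancel i j) (funext ?_)
    refine (Equiv.addRight (j - i)).surjective.forall.2 fun p ↦ ?_
    exact (rotateWord_apply_add _ _ x p).trans (Equiv.swap_apply_left _ _)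

theorem neighborSet_wrappedButterfly [Nontrivial (ZMod m)] (i : ZMod m) (x : ZMod m → α) :
    (wrappedButterfly m α).neighborSet (i, x) =
      Set.range (fun a ↦ (i + 1, update x i a)) ∪
        Set.range (fun a ↦ (i - 1, update x (i - 1) a)) := by
  ext ⟨j, y⟩
  have exists_update_iff (k : ZMod m) : (∃ a, update x k a = y) ↔ ∀ p ≠ k, x p = y p := by
    simp [update_eq_iff]
  have forward : (j = i + 1 ∧ ∀ p ≠ i, y p = x p) ↔
      (j, y) ∈ Set.range fun a ↦ (i + 1, update x i a) := by
    simp only [Set.mem_range, Prod.mk.injEq, exists_and_left, exists_update_iff,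
      eq_comm (a := i + 1), eq_comm (a := x _)]
  have backward : (i = j + 1 ∧ ∀ p ≠ j, x p = y p) ↔
      (j, y) ∈ Set.range fun a ↦ (i - 1, update x (i - 1) a) := by
    simp only [Set.mem_range, Prod.mk.injEq, exists_and_left, exists_update_iff]
    rw [sub_eq_iff_eq_add]
    refine and_congr_right ?_
    rintro rfl
    rw [add_sub_cancel_right]
  rw [mem_neighborSet, wrappedButterfly, fromRel_adj, Set.mem_union, ← forward, ← backward,
    and_iff_right_iff_imp]
  rintro (⟨rfl, -⟩ | ⟨rfl, -⟩) <;> simp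

theorem card_neighborSet_wrappedButterfly [Finite α] (hm : (2 : ZMod m) ≠ 0)
    (u : ZMod m × (ZMod m → α)) :
    Nat.card ((wrappedButterfly m α).neighborSet u) = 2 * Nat.card α := by
  obtain ⟨i, x⟩ := u
  have : Nontrivial (ZMod m) := ⟨2, 0, hm⟩
  have levels_ne : i + 1 ≠ i - 1 := fun h ↦ hm (by linear_combination h)
  have card_range (j k : ZMod m) :
      (Set.range fun a ↦ (j, update x k a)).ncard = Nat.card α :=
    Set.ncard_range_of_injective ((Prod.mk_right_injective j).comp (update_injective x k))
  have ranges_disjoint : Disjoint (Set.range fun a ↦ (i + 1, update x i a))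
      (Set.range fun a ↦ (i - 1, update x (i - 1) a)) := by
    simp [Set.disjoint_left, levels_ne.symm]
  rw [neighborSet_wrappedButterfly, Nat.card_coe_set_eq, Set.ncard_union_eq ranges_disjoint,
    card_range, card_range, two_mul]

end WrappedButterfly

section ButterflyTimesComplete

/-- The vertices of the Cartesian product of the binary wrapped butterfly with `m` levels and the
complete graph on `k` vertices. -/
abbrev ButterflyTimesCompleteVertex (m k : ℕ) : Type := (ZMod m × (ZMod m → Bool)) × Fin k

/-- The Cartesian product of the binary wrapped butterfly with `m` levels and the complete graph on
`k` vertices, which is `(k + 3)`-regular for `m ≥ 3`; for `k = 1` it is the butterfly itself. -/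
abbrev butterflyTimesComplete (m k : ℕ) : SimpleGraph (ButterflyTimesCompleteVertex m k) :=
  wrappedButterfly m Bool □ ⊤

variable {m k : ℕ}

theorem card_neighborSet_butterflyTimesComplete [NeZero k] (hm : (2 : ZMod m) ≠ 0)
    (v : ButterflyTimesCompleteVertex m k) :
    Nat.card ((butterflyTimesComplete m k).neighborSet v) = k + 3 := by
  have butterfly_card := card_neighborSet_wrappedButterfly (α := Bool) hm v.1
  have complete_card : Nat.card ((⊤ : SimpleGraph (Fin k)).neighborSet v.2) = k - 1 := by
    rw [Nat.card_eq_fintype_card, card_neighborSet_eq_degree, complete_graph_degree,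
      Fintype.card_fin]
  have : Finite ((wrappedButterfly m Bool).neighborSet v.1) :=
    Nat.finite_of_card_ne_zero (by simp [butterfly_card])
  rw [card_neighborSet_boxProd, butterfly_card, complete_card, Nat.card_eq_fintype_card,
    Fintype.card_bool]
  have := NeZero.pos k
  omega

theorem ediam_butterflyTimesComplete_le [NeZero m] :
    (butterflyTimesComplete m k).ediam ≤ ↑(2 * m + 1) := by
  push_cast
  exact ediam_boxProd_le.trans (add_le_add ediam_wrappedButterfly_le ediam_top_le_one)

theorem two_pow_le_card_butterflyTimesComplete [NeZero m] [NeZero k] :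
    2 ^ m ≤ Nat.card (ButterflyTimesCompleteVertex m k) := by
  have card_eq : Nat.card (ButterflyTimesCompleteVertex m k) = m * 2 ^ m * k := by
    simp [ZMod.card]
  rw [card_eq]
  exact (Nat.le_mul_of_pos_left _ (NeZero.pos m)).trans (Nat.le_mul_of_pos_right _ (NeZero.pos k))

theorem two_mul_add_one_le_mul_log_card_butterflyTimesComplete [NeZero m] [NeZero k] :
    ((2 * m + 1 : ℕ) : ℝ) ≤
      3 / Real.log 2 * Real.log (Nat.card (ButterflyTimesCompleteVertex m k)) := by
  have mul_log_two_le :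
      m * Real.log 2 ≤ Real.log (Nat.card (ButterflyTimesCompleteVertex m k)) := by
    rw [← Real.log_pow]
    exact Real.log_le_log (by positivity)
      (by exact_mod_cast two_pow_le_card_butterflyTimesComplete)
  have one_le : 1 ≤ m := NeZero.one_le
  calc ((2 * m + 1 : ℕ) : ℝ) ≤ 3 * m := by exact_mod_cast (by omega)
    _ = 3 / Real.log 2 * (m * Real.log 2) := by field_simp
    _ ≤ _ := by gcongr

theorem tendsto_card_butterflyTimesComplete [NeZero k] :
    Filter.Tendsto (fun i : ℕ ↦ Nat.card (ButterflyTimesCompleteVertex (i + 3) k))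
      Filter.atTop Filter.atTop :=
  Filter.tendsto_atTop_mono
    (fun i ↦ calc i ≤ i + 3 := Nat.le_add_right i 3
      _ ≤ 2 ^ (i + 3) := Nat.lt_two_pow_self.le
      _ ≤ _ := two_pow_le_card_butterflyTimesComplete)
    Filter.tendsto_id

end ButterflyTimesComplete

/-- For every `d ≥ 4` and every `0 < c < 1/2` there are a
constant `K > 0` and a sequence of `d`-regular simple graphs `(G_i)_{i ∈ ℕ}`
with `|V(G_i)| → ∞` such that for every `i`, every separator `(A, B, C)` of
`G_i` with separation constant `c` has size
`|C| ≥ |V(G_i)|/(K·log |V(G_i)|)`. -/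
theorem exists_d_regular_sequence_large_separators
    (d : ℕ) (hd : 4 ≤ d) (c : ℝ) (hc0 : 0 < c) (hc : c < 1 / 2) :
    ∃ K : ℝ, 0 < K ∧
    ∃ (V : ℕ → Type) (G : ∀ i, SimpleGraph (V i)),
      (∀ i, Finite (V i)) ∧
      (∀ i, ∀ v : V i, Nat.card ((G i).neighborSet v) = d) ∧
      Filter.Tendsto (fun i => Nat.card (V i)) Filter.atTop Filter.atTop ∧
      ∀ i, ∀ A B C : Set (V i),
        Disjoint A B → Disjoint A C → Disjoint B C → A ∪ B ∪ C = Set.univ →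
        c * (Nat.card (V i) : ℝ) ≤ A.ncard → A.ncard ≤ B.ncard →
        (∀ a ∈ A, ∀ b ∈ B, ¬ (G i).Adj a b) →
        (Nat.card (V i) : ℝ) / (K * Real.log (Nat.card (V i))) ≤ C.ncard := by
  have : NeZero (d - 3) := ⟨by omega⟩
  refine ⟨3 / Real.log 2 / c ^ 2, by positivity, _,
    fun i ↦ butterflyTimesComplete (i + 3) (d - 3), fun i ↦ inferInstance, fun i v ↦ ?_,
    tendsto_card_butterflyTimesComplete, fun i A B C hAB _ _ hABC hA hAleB not_adj ↦ ?_⟩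
  · have : Nontrivial (ZMod (i + 3)) := ZMod.nontrivial_iff.2 (by omega)
    have two_ne_zero : (2 : ZMod (i + 3)) ≠ 0 :=
      Ring.two_ne_zero (by rw [ZMod.ringChar_zmod_n]; omega)
    rw [card_neighborSet_butterflyTimesComplete two_ne_zero, Nat.sub_add_cancel (by omega)]
  · have hB : c * (Nat.card _ : ℝ) ≤ B.ncard := hA.trans (by exact_mod_cast hAleB)
    exact Separates.div_log_le_ncard ⟨hAB, hABC, not_adj⟩ ediam_butterflyTimesComplete_le
      two_mul_add_one_le_mul_log_card_butterflyTimesComplete hc0 hA hB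
end
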